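/- Let t, t' be resource λμ-terms and T a sum in 2⟨λμʳ⟩. If t →_{λʳ} t' + T (i.e. t reduces to the sum t' + T by contracting a λʳ-redex), then m(t) > m(t') in the multiset order on finite multisets of naturals. -/

import Mathlib

/-!
A λʳ-step `(λx.t)[ū] → t⟨[ū]/x⟩` neither creates nor erases μ-abstractions, since every resource of
`ū` is used exactly once. It removes one bag, namely `[ū]` itself. Every other bag survives exactly
once: bags of `t` keep their depth, while bags inside a resource `uᵢ` become deeper by the depth of
the occurrence of `x` that `uᵢ` replaces. This is `linSub_spec`, where the weak increase of depths
is expressed by the relation `Multiset.Rel (· ≤ ·)` between the multisets of depths.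

The resulting invariant (`degMu` is preserved; up to one removed bag, depths weakly increase) is
stable under resource contexts (`ctx_spec`). Since `degMu` is constant, `d ↦ degMu - d` turns
it into: one element of the measure is removed and the others weakly decrease, which is a strict
decrease in the multiset order (`mlt_of_rel`). The last step only uses that `d ↦ degMu - d` is
antitone, so the truncation of natural subtraction plays no role.

Neither `degMu` nor `depths` looks at variables or names, so capture is irrelevant throughout.
-/

set_option maxHeartbeats 1000000

namespace RLMu

inductive Rt : Type where
  | var : ℕ → Rt
  | lam : ℕ → Rt → Rt
  | app : Rt → List Rt → Rt
  | mu  : ℕ → ℕ → Rt → Rt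

noncomputable instance : DecidableEq Rt := Classical.decEq _

namespace Rt

mutual
  def renameN (a b : ℕ) : Rt → Rt
    | var y => var y
    | lam y t => lam y (renameN a b t)
    | app t ts => app (renameN a b t) (renameNBag a b ts)
    | mu g e t =>
        if g = b then mu g e t
        else mu g (if e = b then a else e) (renameN a b t)
  def renameNBag (a b : ℕ) : List Rt → List Rt
    | [] => []
    | t :: ts => renameN a b t :: renameNBag a b ts
end

def modifyIdx (t : Rt) : List (List Rt) → ℕ → List (List Rt)
  | [], _ => []
  | l :: ls, 0 => (t :: l) :: ls
  | l :: ls, i + 1 => l :: modifyIdx t ls i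

def splits (n : ℕ) : List Rt → Multiset (List (List Rt))
  | [] => {List.replicate n []}
  | t :: ts => (splits n ts).bind fun ls => (Multiset.range n).map fun i => modifyIdx t ls i

def splits2 : List Rt → Multiset (List Rt × List Rt)
  | [] => {([], [])}
  | t :: ts => (splits2 ts).bind fun p => {(t :: p.1, p.2), (p.1, t :: p.2)}

-- the (quantitative) linear substitution t⟨[ū]/x⟩ : the sum over all ways of
-- assigning the elements of the bag bijectively to the free occurrences of x in t
mutual
  def linSub (x : ℕ) : Rt → List Rt → Multiset Rt
    | var y, bag =>
        if y = x then (match bag with | [u] => ({u} : Multiset Rt) | _ => 0)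
        else (match bag with | [] => ({var y} : Multiset Rt) | _ => 0)
    | lam y t, bag =>
        if y = x then (match bag with | [] => ({lam y t} : Multiset Rt) | _ => 0)
        else (linSub x t bag).map (lam y)
    | mu g e t, bag => (linSub x t bag).map (mu g e)
    | app t ts, bag =>
        (splits (ts.length + 1) bag).bind fun ls =>
          match ls with
          | l0 :: rest =>
              (linSub x t l0).bind fun s =>
                (linSubBag x ts rest).map fun ss => app s ss
          | [] => 0
  def linSubBag (x : ℕ) : List Rt → List (List Rt) → Multiset (List Rt)
    | [], [] => {([] : List Rt)}
    | [], _ :: _ => 0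
    | _ :: _, [] => 0
    | t :: ts, l :: ls =>
        (linSub x t l).bind fun s => (linSubBag x ts ls).map fun ss => s :: ss
end

end Rt

end RLMu

namespace RLMu
namespace Rt

-- the (quantitative) linear named application ⟨t⟩_a[ū]
mutual
  def nApp (a : ℕ) : Rt → List Rt → Multiset Rt
    | var y, bag => (match bag with | [] => ({var y} : Multiset Rt) | _ => 0)
    | lam y t, bag => (nApp a t bag).map (lam y)
    | mu g e t, bag =>
        if g = a then (match bag with | [] => ({mu g e t} : Multiset Rt) | _ => 0)
        else if e = a then
          (splits2 bag).bind fun p =>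
            (nApp a t p.1).map fun s => mu g e (app s p.2)
        else (nApp a t bag).map (mu g e)
    | app t ts, bag =>
        (splits (ts.length + 1) bag).bind fun ls =>
          match ls with
          | l0 :: rest =>
              (nApp a t l0).bind fun s =>
                (nAppBag a ts rest).map fun ss => app s ss
          | [] => 0
  def nAppBag (a : ℕ) : List Rt → List (List Rt) → Multiset (List Rt)
    | [], [] => {([] : List Rt)}
    | [], _ :: _ => 0
    | _ :: _, [] => 0
    | t :: ts, l :: ls =>
        (nApp a t l).bind fun s => (nAppBag a ts ls).map fun ss => s :: ss
end

mutual
  def degName (a : ℕ) : Rt → ℕ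
    | var _ => 0
    | lam _ t => degName a t
    | app t ts => degName a t + degNameBag a ts
    | mu g e t => if g = a then 0 else (if e = a then 1 else 0) + degName a t
  def degNameBag (a : ℕ) : List Rt → ℕ
    | [] => 0
    | t :: ts => degName a t + degNameBag a ts
end

/-- the linear named application `⟨[e]t⟩_g [ū]` on the named term `[e]t`, a named
term `[e']t'` being represented by the pair `(e', t')` -/
def nAppNamed (g e : ℕ) (t : Rt) (bag : List Rt) : Multiset (ℕ × Rt) :=
  if e = g then
    (splits2 bag).bind fun p => (nApp g t p.1).map fun s => (g, app s p.2)
  else (nApp g t bag).map fun s => (e, s)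

/-- `μa.⟨[b]t⟩_a [ū]`, the reduct of the μ-redex `(μa.[b]t)[ū]` -/
def muRedex (a b : ℕ) (t : Rt) (bag : List Rt) : Multiset Rt :=
  if b = a then
    (splits2 bag).bind fun p => (nApp a t p.1).map fun s => mu a a (app s p.2)
  else (nApp a t bag).map (mu a b)

end Rt

open Rt

/-- base step of the λʳ-reduction -/
inductive BaseLam : Rt → Multiset Rt → Prop
  | step (x : ℕ) (t : Rt) (bag : List Rt) :
      BaseLam (.app (.lam x t) bag) (linSub x t bag)

/-- base step of the μʳ-reduction -/
inductive BaseMu : Rt → Multiset Rt → Prop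
  | step (a b : ℕ) (t : Rt) (bag : List Rt) :
      BaseMu (.app (.mu a b t) bag) (muRedex a b t bag)

/-- base step of the ρʳ-reduction -/
inductive BaseRho : Rt → Multiset Rt → Prop
  | step (g a b e : ℕ) (t : Rt) :
      BaseRho (.mu g a (.mu b e t))
        ({.mu g (if e = b then a else e) (renameN a b t)} : Multiset Rt)

/-- closure of a base reduction under single-hole resource contexts -/
inductive Ctx (B : Rt → Multiset Rt → Prop) : Rt → Multiset Rt → Prop
  | base {t S} : B t S → Ctx B t S
  | lam (x : ℕ) {t S} : Ctx B t S → Ctx B (.lam x t) (S.map (.lam x))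
  | mu (a b : ℕ) {t S} : Ctx B t S → Ctx B (.mu a b t) (S.map (.mu a b))
  | appL (bag : List Rt) {t S} :
      Ctx B t S → Ctx B (.app t bag) (S.map fun s => .app s bag)
  | appR (t : Rt) (l r : List Rt) {u S} :
      Ctx B u S → Ctx B (.app t (l ++ u :: r)) (S.map fun s => .app t (l ++ s :: r))

/-- the quantitative resource reduction →ᵣ⁺ from terms to sums in ℕ⟨λμʳ⟩ -/
def QStep : Rt → Multiset Rt → Prop :=
  Ctx fun t S => BaseLam t S ∨ BaseMu t S ∨ BaseRho t S

/-- the quantitative resource reduction →ᵣ⁺ on sums of ℕ⟨λμʳ⟩ -/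
inductive QRed : Multiset Rt → Multiset Rt → Prop
  | mk {t : Rt} {S R : Multiset Rt} : QStep t S → QRed (t ::ₘ R) (S + R)

/-- the qualitative version (with idempotent sum, i.e. with sums in 2⟨λμʳ⟩)
of the contextual closure of a base reduction: from terms to sums in 2⟨λμʳ⟩ -/
noncomputable def StepOf (B : Rt → Multiset Rt → Prop) (t : Rt) (T : Finset Rt) : Prop :=
  ∃ S : Multiset Rt, Ctx B t S ∧ T = S.toFinset

/-- the reduction →_{λʳ} : contextual closure of the λʳ base step, in 2⟨λμʳ⟩ -/
noncomputable def StepLam : Rt → Finset Rt → Prop := StepOf BaseLam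
/-- the reduction →_{μʳ} : contextual closure of the μʳ base step, in 2⟨λμʳ⟩ -/
noncomputable def StepMu : Rt → Finset Rt → Prop := StepOf BaseMu
/-- the reduction →_{ρʳ} : contextual closure of the ρʳ base step, in 2⟨λμʳ⟩ -/
noncomputable def StepRho : Rt → Finset Rt → Prop := StepOf BaseRho

/-- the resource reduction →ᵣ from terms to sums in 2⟨λμʳ⟩ -/
noncomputable def RStep (t : Rt) (T : Finset Rt) : Prop :=
  ∃ S : Multiset Rt, QStep t S ∧ T = S.toFinset

/-- the resource reduction →ᵣ on sums in 2⟨λμʳ⟩ -/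
inductive FRed : Finset Rt → Finset Rt → Prop
  | mk {t : Rt} {R S : Finset Rt} : RStep t S → t ∉ R → FRed (insert t R) (S ∪ R)

/-- a resource term is →ᵣ-normal -/
def NormalTm (t : Rt) : Prop := ∀ S : Multiset Rt, ¬ QStep t S

end RLMu

namespace RLMu
namespace Rt

-- number of μ-abstractions occurring in a term
mutual
  def degMu : Rt → ℕ
    | var _ => 0
    | lam _ t => degMu t
    | mu _ _ t => degMu t + 1
    | app t ts => degMu t + degMuBag ts
  def degMuBag : List Rt → ℕ
    | [] => 0
    | t :: ts => degMu t + degMuBag ts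
end

-- the multiset of the depths (number of enclosing named subterms) of the
-- occurrences of bags in a term
mutual
  def depths : Rt → Multiset ℕ
    | var _ => 0
    | lam _ t => depths t
    | mu _ _ t => (depths t).map (· + 1)
    | app t ts => (0 : ℕ) ::ₘ (depths t + depthsBag ts)
  def depthsBag : List Rt → Multiset ℕ
    | [] => 0
    | t :: ts => depths t + depthsBag ts
end

/-- the multiset measure `m(t)` : the multiset of `deg_μ(t) - d_t(b)` over the
occurrences `b` of bags in `t` -/
def msr (t : Rt) : Multiset ℕ := (depths t).map fun d => degMu t - d

end Rt

/-- the (Dershowitz–Manna) multiset order on finite multisets of naturals -/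
def MLT (M N : Multiset ℕ) : Prop :=
  ∃ X Y Z : Multiset ℕ, X ≠ 0 ∧ N = Z + X ∧ M = Z + Y ∧ ∀ y ∈ Y, ∃ x ∈ X, y < x

/-- the measure `SN(t) = (m(t), deg_μ(t))` -/
def SNm (t : Rt) : Multiset ℕ × ℕ := (Rt.msr t, Rt.degMu t)

/-- lexicographic order on `!ℕ × ℕ` (multiset order on the first component) -/
def SNlt : Multiset ℕ × ℕ → Multiset ℕ × ℕ → Prop := Prod.Lex MLT (· < ·)

end RLMu

namespace RLMu
namespace Rt

lemma rel_le_refl (A : Multiset ℕ) : Multiset.Rel (· ≤ ·) A A :=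
  Multiset.rel_refl_of_refl_on fun _ _ => le_rfl

lemma rel_le_map_succ (A : Multiset ℕ) : Multiset.Rel (· ≤ ·) A (A.map (· + 1)) :=
  Multiset.rel_map_right.2 (Multiset.rel_refl_of_refl_on fun _ _ => Nat.le_succ _)

lemma rel_map_succ {A B : Multiset ℕ} (h : Multiset.Rel (· ≤ ·) A B) :
    Multiset.Rel (· ≤ ·) (A.map (· + 1)) (B.map (· + 1)) :=
  Multiset.rel_map.2 (h.mono fun _ _ _ _ h => Nat.succ_le_succ h)

lemma modifyIdx_spec (t : Rt) : ∀ (ls : List (List Rt)) (i : ℕ), i < ls.length →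
    (modifyIdx t ls i).length = ls.length ∧
    ((modifyIdx t ls i).map degMuBag).sum = degMu t + (ls.map degMuBag).sum ∧
    ((modifyIdx t ls i).map depthsBag).sum = depths t + (ls.map depthsBag).sum
  | [], _, h => by simp at h
  | l :: ls, 0, _ => by simp [modifyIdx, degMuBag, depthsBag, add_assoc]
  | l :: ls, i + 1, h => by
      obtain ⟨h1, h2, h3⟩ := modifyIdx_spec t ls i (by simpa using h)
      refine ⟨by simp [modifyIdx, h1], by simp [modifyIdx, h2]; omega, ?_⟩
      simp only [modifyIdx, List.map_cons, List.sum_cons, h3]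
      exact add_left_comm _ _ _

/-- Splitting a bag into `n` bags redistributes its μ-abstractions and its inner bags. -/
lemma splits_spec (n : ℕ) : ∀ (bag : List Rt) (ls : List (List Rt)), ls ∈ splits n bag →
    ls.length = n ∧ (ls.map degMuBag).sum = degMuBag bag ∧
      (ls.map depthsBag).sum = depthsBag bag
  | [], ls, h => by
      simp only [splits, Multiset.mem_singleton] at h
      subst h
      simp [degMuBag, depthsBag]
  | t :: ts, ls, h => by
      simp only [splits, Multiset.mem_bind, Multiset.mem_map, Multiset.mem_range] at h
      obtain ⟨ls', h', i, hi, rfl⟩ := h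
      obtain ⟨h1, h2, h3⟩ := splits_spec n ts ls' h'
      obtain ⟨k1, k2, k3⟩ := modifyIdx_spec t ls' i (h1 ▸ hi)
      exact ⟨k1.trans h1, by rw [k2, h2, degMuBag], by rw [k3, h3, depthsBag]⟩

mutual

/-- Linear substitution preserves the number of μ-abstractions, and each bag of `t` or of the
substituted resources survives exactly once, at a depth at least its former one. -/
lemma linSub_spec (x : ℕ) : ∀ (t : Rt) (bag : List Rt) (s : Rt), s ∈ linSub x t bag →
    degMu s = degMu t + degMuBag bag ∧
      Multiset.Rel (· ≤ ·) (depths t + depthsBag bag) (depths s)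
  | .var y, bag, s, h => by
      simp only [linSub] at h
      split_ifs at h
      · split at h
        · rw [Multiset.mem_singleton] at h
          subst h
          simp [degMu, degMuBag, depths, depthsBag, rel_le_refl]
        · simp at h
      · split at h
        · rw [Multiset.mem_singleton] at h
          subst h
          simp [degMu, degMuBag, depths, depthsBag]
        · simp at h
  | .lam y t, bag, s, h => by
      simp only [linSub] at h
      split_ifs at h
      · split at h
        · rw [Multiset.mem_singleton] at h
          subst h
          simp [degMu, degMuBag, depths, depthsBag, rel_le_refl]
        · simp at h
      · obtain ⟨s', hs', rfl⟩ := Multiset.mem_map.1 h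
        simpa only [degMu, depths] using linSub_spec x t bag s' hs'
  | .mu g e t, bag, s, h => by
      simp only [linSub] at h
      obtain ⟨s', hs', rfl⟩ := Multiset.mem_map.1 h
      obtain ⟨h1, h2⟩ := linSub_spec x t bag s' hs'
      refine ⟨by simp only [degMu]; omega, ?_⟩
      have h3 := rel_map_succ h2
      rw [Multiset.map_add] at h3
      simp only [depths]
      exact ((rel_le_refl _).add (rel_le_map_succ _)).trans _ h3
  | .app t ts, bag, s, h => by
      simp only [linSub, Multiset.mem_bind] at h
      obtain ⟨ls, hls, h⟩ := h
      obtain ⟨-, k2, k3⟩ := splits_spec _ _ _ hls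
      cases ls with
      | nil => simp at h
      | cons l0 rest =>
        simp only [Multiset.mem_bind, Multiset.mem_map] at h
        obtain ⟨s', hs', ss, hss, rfl⟩ := h
        obtain ⟨a1, a2⟩ := linSub_spec x t l0 s' hs'
        obtain ⟨b1, b2⟩ := linSubBag_spec x ts rest ss hss
        simp only [List.map_cons, List.sum_cons] at k2 k3
        refine ⟨by simp only [degMu]; omega, ?_⟩
        simp only [depths, Multiset.cons_add]
        refine Multiset.Rel.cons le_rfl ?_
        rw [← k3, add_add_add_comm]
        exact a2.add b2

lemma linSubBag_spec (x : ℕ) : ∀ (ts : List Rt) (ls : List (List Rt)) (ss : List Rt),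
    ss ∈ linSubBag x ts ls →
    degMuBag ss = degMuBag ts + (ls.map degMuBag).sum ∧
      Multiset.Rel (· ≤ ·) (depthsBag ts + (ls.map depthsBag).sum) (depthsBag ss)
  | [], [], ss, h => by
      simp only [linSubBag, Multiset.mem_singleton] at h
      subst h
      simp [degMuBag, depthsBag]
  | [], _ :: _, ss, h => by simp [linSubBag] at h
  | _ :: _, [], ss, h => by simp [linSubBag] at h
  | t :: ts, l :: ls, ss, h => by
      simp only [linSubBag, Multiset.mem_bind, Multiset.mem_map] at h
      obtain ⟨s', hs', ss', hss, rfl⟩ := h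
      obtain ⟨a1, a2⟩ := linSub_spec x t l s' hs'
      obtain ⟨b1, b2⟩ := linSubBag_spec x ts ls ss' hss
      simp only [List.map_cons, List.sum_cons]
      refine ⟨by simp only [degMuBag]; omega, ?_⟩
      simp only [depthsBag]
      rw [add_add_add_comm]
      exact a2.add b2

end

lemma degMuBag_append (l r : List Rt) : degMuBag (l ++ r) = degMuBag l + degMuBag r := by
  induction l with
  | nil => simp [degMuBag]
  | cons t l ih => simp [degMuBag, ih, add_assoc]

lemma depthsBag_append (l r : List Rt) : depthsBag (l ++ r) = depthsBag l + depthsBag r := by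
  induction l with
  | nil => simp [depthsBag]
  | cons t l ih => simp [depthsBag, ih, add_assoc]

/-- The invariant of a λʳ-step: `d` is the depth of the bag of the contracted redex, and `A` collects
the depths of the other bags. -/
lemma ctx_spec {t : Rt} {S : Multiset Rt} (h : Ctx BaseLam t S) : ∀ t' ∈ S,
    degMu t' = degMu t ∧
      ∃ d A, depths t = d ::ₘ A ∧ Multiset.Rel (· ≤ ·) A (depths t') := by
  induction h with
  | base hB =>
    obtain ⟨x, t, bag⟩ := hB
    intro t' ht'
    obtain ⟨h1, h2⟩ := linSub_spec x t bag t' ht'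
    exact ⟨by simpa only [degMu] using h1, 0, _, by simp only [depths], h2⟩
  | lam x _ ih =>
    intro t' ht'
    obtain ⟨s, hs, rfl⟩ := Multiset.mem_map.1 ht'
    simpa only [degMu, depths] using ih s hs
  | mu a b _ ih =>
    intro t' ht'
    obtain ⟨s, hs, rfl⟩ := Multiset.mem_map.1 ht'
    obtain ⟨h1, d, A, h2, h3⟩ := ih s hs
    refine ⟨by simp only [degMu, h1], d + 1, A.map (· + 1), ?_, ?_⟩
    · simp only [depths, h2, Multiset.map_cons]
    · simpa only [depths] using rel_map_succ h3
  | appL bag _ ih =>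
    intro t' ht'
    obtain ⟨s, hs, rfl⟩ := Multiset.mem_map.1 ht'
    obtain ⟨h1, d, A, h2, h3⟩ := ih s hs
    refine ⟨by simp only [degMu, h1], d, 0 ::ₘ (A + depthsBag bag), ?_, ?_⟩
    · simp only [depths, h2, Multiset.cons_add]
      exact Multiset.cons_swap _ _ _
    · simp only [depths]
      exact Multiset.Rel.cons le_rfl (h3.add (rel_le_refl _))
  | appR t l r _ ih =>
    intro t' ht'
    obtain ⟨s, hs, rfl⟩ := Multiset.mem_map.1 ht'
    obtain ⟨h1, d, A, h2, h3⟩ := ih s hs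
    refine ⟨by simp only [degMu, degMuBag_append, degMuBag, h1], d,
      0 ::ₘ (depths t + (depthsBag l + (A + depthsBag r))), ?_, ?_⟩
    · simp only [depths, depthsBag_append, depthsBag, h2, Multiset.cons_add, Multiset.add_cons]
      exact Multiset.cons_swap _ _ _
    · simp only [depths, depthsBag_append, depthsBag]
      exact Multiset.Rel.cons le_rfl
        ((rel_le_refl _).add ((rel_le_refl _).add (h3.add (rel_le_refl _))))

/-- Weakly decreasing elements one by one is a weak decrease in the multiset order: unchanged
elements form the common part `Z`, the changed ones `X` are replaced by `Y`. -/
lemma exists_of_rel {A B : Multiset ℕ} (h : Multiset.Rel (fun a b => b ≤ a) A B) :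
    ∃ X Y Z : Multiset ℕ, A = Z + X ∧ B = Z + Y ∧ ∀ y ∈ Y, ∃ x ∈ X, y < x := by
  induction h with
  | zero => exact ⟨0, 0, 0, by simp⟩
  | @cons a b A B hab _ ih =>
    obtain ⟨X, Y, Z, rfl, rfl, hXY⟩ := ih
    rcases hab.eq_or_lt with rfl | hlt
    · exact ⟨X, Y, b ::ₘ Z, by simp, by simp, hXY⟩
    · refine ⟨a ::ₘ X, b ::ₘ Y, Z, by simp, by simp, fun y hy => ?_⟩
      rcases Multiset.mem_cons.1 hy with rfl | hy
      · exact ⟨a, Multiset.mem_cons_self _ _, hlt⟩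
      · obtain ⟨x, hx, hlt'⟩ := hXY y hy
        exact ⟨x, Multiset.mem_cons_of_mem hx, hlt'⟩

lemma mlt_of_rel {A B : Multiset ℕ} (c : ℕ) (h : Multiset.Rel (fun a b => b ≤ a) A B) :
    MLT B (c ::ₘ A) := by
  obtain ⟨X, Y, Z, rfl, rfl, hXY⟩ := exists_of_rel h
  refine ⟨c ::ₘ X, Y, Z, Multiset.cons_ne_zero, by simp, rfl, fun y hy => ?_⟩
  obtain ⟨x, hx, hlt⟩ := hXY y hy
  exact ⟨x, Multiset.mem_cons_of_mem hx, hlt⟩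

end Rt
end RLMu

namespace RLMu

/-- Proposition 2.9: a λʳ-reduction step strictly decreases the multiset
measure `m` of the contracted addend. -/
theorem lamStep_msr_decreases (t t' : Rt) (T : Finset Rt)
    (h : StepLam t (insert t' T)) :
    MLT (Rt.msr t') (Rt.msr t) := by
  obtain ⟨S, hS, hT⟩ := h
  have ht' : t' ∈ S := Multiset.mem_toFinset.1 (hT ▸ Finset.mem_insert_self t' T)
  obtain ⟨h1, d, A, h2, h3⟩ := Rt.ctx_spec hS t' ht'
  rw [Rt.msr, Rt.msr, h1, h2, Multiset.map_cons]
  exact Rt.mlt_of_rel _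
    (Multiset.rel_map.2 (h3.mono fun _ _ _ _ hab => Nat.sub_le_sub_left hab _))

end RLMu
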